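/- arXiv:1704.03158 — 6 statements merged into one kernel-verified Lean document; each statement's English description precedes it below -/
import Mathlib

section
/- Let d ≥ 1, let f : ℝ^d → ℝ^d satisfy f(0) = 0 and the local Lipschitz condition with nondecreasing constants L_R, and let h > 0. Then the modified truncated function f_h is globally Lipschitz with constant 3·L_h: for all x, x̄ ∈ ℝ^d, |f_h(x) − f_h(x̄)| ≤ 3·L_h·|x − x̄|. -/
open Set

/-- The modified truncated function `f_h`. -/
noncomputable def trunc {d : ℕ} (f : EuclideanSpace ℝ (Fin d) → EuclideanSpace ℝ (Fin d))
    (h : ℝ) (x : EuclideanSpace ℝ (Fin d)) : EuclideanSpace ℝ (Fin d) :=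
  if ‖x‖ ≤ h then f x else (‖x‖ / h) • f ((h / ‖x‖) • x)

/-!
Write `ρ x = max ‖x‖ h` and let `p x = (h / ρ x) • x` be the radial retraction onto the closed ball
of radius `h`, on which `f` has Lipschitz constant `K`; then `f_h x = (ρ x / h) • f (p x)`. In
`f_h x - f_h y = ((ρ x - ρ y) / h) • f (p x) + (ρ y / h) • (f (p x) - f (p y))`,
the first term contributes at most `K * ‖x - y‖`, because `ρ` is nonexpansive and
`‖f (p x)‖ ≤ K * h`. The second contributes at most twice as much, because
`(ρ y / h) • (p x - p y) = ((ρ y - ρ x) / ρ x) • x + (x - y)`.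
-/

open Metric
open scoped NNReal

section RadialExtension

variable {E : Type*} [SeminormedAddCommGroup E]

theorem abs_max_norm_sub_max_norm_le (h : ℝ) (x y : E) :
    |max ‖x‖ h - max ‖y‖ h| ≤ ‖x - y‖ :=
  (abs_max_sub_max_le_abs _ _ _).trans (abs_norm_sub_norm_le x y)

variable [NormedSpace ℝ E] {h : ℝ}

/-- The radial retraction of a seminormed space onto its closed ball of radius `h > 0` about `0`.
Dividing by `max ‖x‖ h` covers the points inside and outside the ball by one formula. -/
noncomputable def radialRetraction (h : ℝ) (x : E) : E :=
  (h / max ‖x‖ h) • x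

theorem radialRetraction_mem_closedBall (hh : 0 < h) (x : E) :
    radialRetraction h x ∈ closedBall 0 h := by
  have hρ : 0 < max ‖x‖ h := lt_max_of_lt_right hh
  rw [mem_closedBall_zero_iff, radialRetraction, norm_smul, Real.norm_of_nonneg (by positivity),
    div_mul_eq_mul_div, div_le_iff₀ hρ]
  gcongr
  exact le_max_left _ _

theorem smul_radialRetraction_sub (hh : 0 < h) (x y : E) :
    (max ‖y‖ h / h) • (radialRetraction h x - radialRetraction h y) =
      ((max ‖y‖ h - max ‖x‖ h) / max ‖x‖ h) • x + (x - y) := by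
  have hρx : max ‖x‖ h ≠ 0 := (lt_max_of_lt_right hh).ne'
  have hρy : max ‖y‖ h ≠ 0 := (lt_max_of_lt_right hh).ne'
  unfold radialRetraction
  match_scalars <;> field_simp
  ring

theorem norm_smul_radialRetraction_sub_le (hh : 0 < h) (x y : E) :
    ‖(max ‖y‖ h / h) • (radialRetraction h x - radialRetraction h y)‖ ≤ 2 * ‖x - y‖ := by
  have hρ : 0 < max ‖x‖ h := lt_max_of_lt_right hh
  have norm_radial_le : ‖((max ‖y‖ h - max ‖x‖ h) / max ‖x‖ h) • x‖ ≤ ‖x - y‖ := by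
    rw [norm_smul, norm_div, Real.norm_of_nonneg hρ.le, Real.norm_eq_abs, abs_sub_comm,
      div_mul_eq_mul_div, div_le_iff₀ hρ]
    gcongr
    · exact abs_max_norm_sub_max_norm_le h x y
    · exact le_max_left _ _
  calc ‖(max ‖y‖ h / h) • (radialRetraction h x - radialRetraction h y)‖
      = ‖((max ‖y‖ h - max ‖x‖ h) / max ‖x‖ h) • x + (x - y)‖ := by
        rw [smul_radialRetraction_sub hh]
    _ ≤ ‖x - y‖ + ‖x - y‖ := norm_add_le_of_le norm_radial_le le_rfl
    _ = 2 * ‖x - y‖ := (two_mul _).symm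

variable {F : Type*} [SeminormedAddCommGroup F] {f : E → F} {K : ℝ≥0}

theorem norm_apply_radialRetraction_le (hf : LipschitzOnWith K f (closedBall 0 h)) (hf0 : f 0 = 0)
    (hh : 0 < h) (x : E) : ‖f (radialRetraction h x)‖ ≤ K * h := by
  have hx := radialRetraction_mem_closedBall hh x
  calc ‖f (radialRetraction h x)‖ ≤ K * ‖radialRetraction h x‖ := by
        simpa only [hf0, sub_zero] using hf.norm_sub_le hx (mem_closedBall_self hh.le)
    _ ≤ K * h := by
        gcongr
        exact mem_closedBall_zero_iff.mp hx

variable [NormedSpace ℝ F]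

/-- The extension of `f` from the closed ball of radius `h > 0` about `0` that is positively
homogeneous along each ray outside the ball; this is `trunc` for maps between arbitrary seminormed
spaces. -/
noncomputable def radialExtension (f : E → F) (h : ℝ) (x : E) : F :=
  if ‖x‖ ≤ h then f x else (‖x‖ / h) • f ((h / ‖x‖) • x)

theorem radialExtension_eq_smul_radialRetraction (hh : 0 < h) (x : E) :
    radialExtension f h x = (max ‖x‖ h / h) • f (radialRetraction h x) := by
  unfold radialExtension radialRetraction
  split_ifs with hx
  · rw [max_eq_right hx, div_self hh.ne', one_smul, one_smul]
  · rw [max_eq_left (not_le.mp hx).le]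

theorem norm_smul_apply_radialRetraction_le (hf : LipschitzOnWith K f (closedBall 0 h))
    (hf0 : f 0 = 0) (hh : 0 < h) (x y : E) :
    ‖((max ‖x‖ h - max ‖y‖ h) / h) • f (radialRetraction h x)‖ ≤ K * ‖x - y‖ := by
  rw [norm_smul, norm_div, Real.norm_of_nonneg hh.le, Real.norm_eq_abs]
  calc |max ‖x‖ h - max ‖y‖ h| / h * ‖f (radialRetraction h x)‖
      ≤ ‖x - y‖ / h * (K * h) := by
        gcongr
        · exact abs_max_norm_sub_max_norm_le h x y
        · exact norm_apply_radialRetraction_le hf hf0 hh x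
    _ = K * ‖x - y‖ := by field_simp

theorem norm_smul_apply_radialRetraction_sub_le (hf : LipschitzOnWith K f (closedBall 0 h))
    (hh : 0 < h) (x y : E) :
    ‖(max ‖y‖ h / h) • (f (radialRetraction h x) - f (radialRetraction h y))‖ ≤
      2 * K * ‖x - y‖ := by
  calc ‖(max ‖y‖ h / h) • (f (radialRetraction h x) - f (radialRetraction h y))‖
      ≤ ‖max ‖y‖ h / h‖ * (K * ‖radialRetraction h x - radialRetraction h y‖) := by
        rw [norm_smul]
        gcongr
        exact hf.norm_sub_le (radialRetraction_mem_closedBall hh x)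
          (radialRetraction_mem_closedBall hh y)
    _ = K * ‖(max ‖y‖ h / h) • (radialRetraction h x - radialRetraction h y)‖ := by
        rw [norm_smul, mul_left_comm]
    _ ≤ K * (2 * ‖x - y‖) := by
        gcongr
        exact norm_smul_radialRetraction_sub_le hh x y
    _ = 2 * K * ‖x - y‖ := by ring

theorem stmt0_general (hf : LipschitzOnWith K f (closedBall 0 h)) (hf0 : f 0 = 0) (hh : 0 < h) :
    LipschitzWith (3 * K) (radialExtension f h) := by
  refine lipschitzWith_iff_norm_sub_le.mpr fun x y ↦ ?_
  have sub_eq : radialExtension f h x - radialExtension f h y =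
      ((max ‖x‖ h - max ‖y‖ h) / h) • f (radialRetraction h x) +
        (max ‖y‖ h / h) • (f (radialRetraction h x) - f (radialRetraction h y)) := by
    simp only [radialExtension_eq_smul_radialRetraction hh]
    module
  calc ‖radialExtension f h x - radialExtension f h y‖
      ≤ K * ‖x - y‖ + 2 * K * ‖x - y‖ := by
        rw [sub_eq]
        exact norm_add_le_of_le (norm_smul_apply_radialRetraction_le hf hf0 hh x y)
          (norm_smul_apply_radialRetraction_sub_le hf hh x y)
    _ = ↑(3 * K) * ‖x - y‖ := by
        push_cast
        ring

end RadialExtension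

theorem stmt0 {d : ℕ} (hd : 1 ≤ d)
    (f : EuclideanSpace ℝ (Fin d) → EuclideanSpace ℝ (Fin d)) (hf0 : f 0 = 0)
    (L : ℝ → ℝ) (hLpos : ∀ R > (0:ℝ), 0 < L R) (hLmono : MonotoneOn L (Set.Ioi 0))
    (hlip : ∀ R > (0:ℝ), ∀ x y : EuclideanSpace ℝ (Fin d), ‖x‖ ≤ R → ‖y‖ ≤ R →
      ‖f x - f y‖ ≤ L R * ‖x - y‖)
    (h : ℝ) (hh : 0 < h) :
    ∀ x y : EuclideanSpace ℝ (Fin d),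
      ‖trunc f h x - trunc f h y‖ ≤ 3 * L h * ‖x - y‖ := by
  have hf : LipschitzOnWith ⟨L h, (hLpos h hh).le⟩ f (closedBall 0 h) :=
    lipschitzOnWith_iff_norm_sub_le.mpr fun x hx y hy ↦
      hlip h hh x y (mem_closedBall_zero_iff.mp hx) (mem_closedBall_zero_iff.mp hy)
  exact (stmt0_general hf hf0 hh).norm_sub_le
end

section
/- Let d ≥ 1, let f : ℝ^d → ℝ^d satisfy f(0) = 0 and the local Lipschitz condition with nondecreasing constants L_R, and let h > 0. Then for all x, x̄ ∈ ℝ^d with |x| > h and |x̄| > h, one has |(|x|/h)·f(h·x/|x|) − (|x̄|/h)·f(h·x̄/|x̄|)| ≤ 3·L_h·|x − x̄|. -/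
open Set

/-!
A point `x ≠ 0` is recovered from its radial projection `u` onto the sphere of radius `r` as
`x = (‖x‖ / r) • u`. With `v` the projection of `y`, the difference of the extended values is
`(‖x‖ / r) • (f u - f v) + ((‖x‖ - ‖y‖) / r) • f v`. The triangle inequality
gives `(‖x‖ / r) * ‖u - v‖ ≤ 2 * ‖x - y‖`, so the first summand contributes `2 * K`; the second
contributes `K` because `‖f v‖ ≤ K * r`.
-/

open Metric
open scoped NNReal

section

variable {E F : Type*} [SeminormedAddCommGroup E] [NormedSpace ℝ E]
  [SeminormedAddCommGroup F] [NormedSpace ℝ F]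

theorem div_norm_smul_mem_sphere {r : ℝ} (hr : 0 ≤ r) {x : E} (hx : ‖x‖ ≠ 0) :
    (r / ‖x‖) • x ∈ sphere (0 : E) r := by
  rw [mem_sphere_zero_iff_norm, norm_smul, norm_div, norm_norm, Real.norm_of_nonneg hr,
    div_mul_cancel₀ r hx]

theorem norm_mul_norm_div_norm_smul_sub_le {r : ℝ} (hr : 0 ≤ r) {x y : E}
    (hx : ‖x‖ ≠ 0) (hy : ‖y‖ ≠ 0) :
    ‖x‖ * ‖(r / ‖x‖) • x - (r / ‖y‖) • y‖ ≤ 2 * r * ‖x - y‖ := by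
  have decomposition : ‖x‖ • ((r / ‖x‖) • x - (r / ‖y‖) • y) =
      r • (x - y) + (‖y‖ - ‖x‖) • (r / ‖y‖) • y := by
    match_scalars <;> field_simp
    ring
  have norm_projection : ‖(r / ‖y‖) • y‖ = r :=
    mem_sphere_zero_iff_norm.1 (div_norm_smul_mem_sphere hr hy)
  calc ‖x‖ * ‖(r / ‖x‖) • x - (r / ‖y‖) • y‖
      = ‖r • (x - y) + (‖y‖ - ‖x‖) • (r / ‖y‖) • y‖ := by
        rw [← decomposition, norm_smul, norm_norm]
    _ ≤ r * ‖x - y‖ + |‖y‖ - ‖x‖| * r := by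
        grw [norm_add_le, norm_smul, norm_smul, norm_projection, Real.norm_of_nonneg hr,
          Real.norm_eq_abs]
    _ ≤ r * ‖x - y‖ + ‖x - y‖ * r := by
        grw [abs_norm_sub_norm_le, norm_sub_rev]
    _ = 2 * r * ‖x - y‖ := by ring

/-- The extension of `f` from the sphere of radius `r` about `0` to a positively homogeneous map of
degree one. The map `f` is total, but for `r > 0` only its values on that sphere matter: at points
of norm zero the factor `‖x‖ / r` vanishes, whatever `f` does. -/
noncomputable def homogeneousExtension (r : ℝ) (f : E → F) (x : E) : F :=
  (‖x‖ / r) • f ((r / ‖x‖) • x)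

namespace homogeneousExtension

variable {r : ℝ} {f : E → F} {K M : ℝ≥0}

theorem norm_le (hr : 0 < r) (hM : ∀ v ∈ sphere (0 : E) r, ‖f v‖ ≤ M * r) (x : E) :
    ‖homogeneousExtension r f x‖ ≤ M * ‖x‖ := by
  by_cases hx : ‖x‖ = 0
  · simp [homogeneousExtension, hx]
  calc ‖homogeneousExtension r f x‖
      = ‖x‖ / r * ‖f ((r / ‖x‖) • x)‖ := by
        rw [homogeneousExtension, norm_smul, Real.norm_of_nonneg (by positivity)]
    _ ≤ ‖x‖ / r * (M * r) := by
        gcongr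
        exact hM _ (div_norm_smul_mem_sphere hr.le hx)
    _ = M * ‖x‖ := by field_simp

theorem norm_sub_le_of_norm_ne_zero (hr : 0 < r) (hf : LipschitzOnWith K f (sphere 0 r))
    (hM : ∀ v ∈ sphere (0 : E) r, ‖f v‖ ≤ M * r) {x y : E} (hx : ‖x‖ ≠ 0) (hy : ‖y‖ ≠ 0) :
    ‖homogeneousExtension r f x - homogeneousExtension r f y‖ ≤ (2 * K + M) * ‖x - y‖ := by
  have angular := norm_mul_norm_div_norm_smul_sub_le hr.le hx hy
  have hu := div_norm_smul_mem_sphere hr.le hx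
  have hv := div_norm_smul_mem_sphere hr.le hy
  unfold homogeneousExtension
  set u := (r / ‖x‖) • x
  set v := (r / ‖y‖) • y
  calc ‖(‖x‖ / r) • f u - (‖y‖ / r) • f v‖
      = ‖(‖x‖ / r) • (f u - f v) + ((‖x‖ - ‖y‖) / r) • f v‖ := by
        congr 1
        module
    _ ≤ ‖x‖ / r * ‖f u - f v‖ + |‖x‖ - ‖y‖| / r * ‖f v‖ := by
        grw [norm_add_le, norm_smul, norm_smul, norm_div, norm_div, norm_norm,
          Real.norm_of_nonneg hr.le, Real.norm_eq_abs]
    _ ≤ ‖x‖ / r * (K * ‖u - v‖) + ‖x - y‖ / r * (M * r) := by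
        gcongr
        · exact hf.norm_sub_le hu hv
        · exact abs_norm_sub_norm_le x y
        · exact hM v hv
    _ = K / r * (‖x‖ * ‖u - v‖) + M * ‖x - y‖ := by field_simp
    _ ≤ K / r * (2 * r * ‖x - y‖) + M * ‖x - y‖ := by gcongr
    _ = (2 * K + M) * ‖x - y‖ := by field_simp

theorem norm_sub_le_of_norm_eq_zero (hr : 0 < r)
    (hM : ∀ v ∈ sphere (0 : E) r, ‖f v‖ ≤ M * r) {x y : E} (hxy : ‖x‖ = 0 ∨ ‖y‖ = 0) :
    ‖homogeneousExtension r f x - homogeneousExtension r f y‖ ≤ M * ‖x - y‖ := by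
  have norm_add_norm : ‖x‖ + ‖y‖ = |‖x‖ - ‖y‖| := by
    rcases hxy with hx | hy
    · simp [hx]
    · simp [hy]
  calc ‖homogeneousExtension r f x - homogeneousExtension r f y‖
      ≤ M * ‖x‖ + M * ‖y‖ := by
        grw [norm_sub_le, norm_le hr hM, norm_le hr hM]
    _ = M * |‖x‖ - ‖y‖| := by rw [← mul_add, norm_add_norm]
    _ ≤ M * ‖x - y‖ := by grw [abs_norm_sub_norm_le]

theorem lipschitzWith (hr : 0 < r) (hf : LipschitzOnWith K f (sphere 0 r))
    (hM : ∀ v ∈ sphere (0 : E) r, ‖f v‖ ≤ M * r) :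
    LipschitzWith (2 * K + M) (homogeneousExtension r f) := by
  refine lipschitzWith_iff_norm_sub_le.2 fun x y ↦ ?_
  push_cast
  by_cases hxy : ‖x‖ = 0 ∨ ‖y‖ = 0
  · grw [norm_sub_le_of_norm_eq_zero hr hM hxy]
    gcongr
    exact le_add_of_nonneg_left (by positivity)
  · obtain ⟨hx, hy⟩ := not_or.1 hxy
    exact norm_sub_le_of_norm_ne_zero hr hf hM hx hy

end homogeneousExtension

theorem stmt1_general {r : ℝ} (hr : 0 < r) {f : E → F} (hf0 : f 0 = 0) {K : ℝ≥0}
    (hf : LipschitzOnWith K f (closedBall 0 r)) :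
    LipschitzWith (3 * K) (homogeneousExtension r f) := by
  have norm_le_on_sphere : ∀ v ∈ sphere (0 : E) r, ‖f v‖ ≤ K * r := fun v hv ↦ by
    simpa [hf0, mem_sphere_zero_iff_norm.1 hv] using
      hf.norm_sub_le (sphere_subset_closedBall hv) (mem_closedBall_self hr.le)
  have lipschitz := homogeneousExtension.lipschitzWith hr (hf.mono sphere_subset_closedBall)
    norm_le_on_sphere
  rwa [show 2 * K + K = 3 * K by ring] at lipschitz

end

theorem stmt1 {d : ℕ} (hd : 1 ≤ d)
    (f : EuclideanSpace ℝ (Fin d) → EuclideanSpace ℝ (Fin d)) (hf0 : f 0 = 0)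
    (L : ℝ → ℝ) (hLpos : ∀ R > (0:ℝ), 0 < L R) (hLmono : MonotoneOn L (Set.Ioi 0))
    (hlip : ∀ R > (0:ℝ), ∀ x y : EuclideanSpace ℝ (Fin d), ‖x‖ ≤ R → ‖y‖ ≤ R →
      ‖f x - f y‖ ≤ L R * ‖x - y‖)
    (h : ℝ) (hh : 0 < h) :
    ∀ x y : EuclideanSpace ℝ (Fin d), h < ‖x‖ → h < ‖y‖ →
      ‖(‖x‖ / h) • f ((h / ‖x‖) • x) - (‖y‖ / h) • f ((h / ‖y‖) • y)‖ ≤ 3 * L h * ‖x - y‖ := by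
  intro x y _ _
  lift L h to ℝ≥0 using (hLpos h hh).le with K hK
  have hf : LipschitzOnWith K f (closedBall 0 h) :=
    lipschitzOnWith_iff_norm_sub_le.2 fun u hu v hv ↦ hK ▸ hlip h hh u v
      (mem_closedBall_zero_iff.1 hu) (mem_closedBall_zero_iff.1 hv)
  exact_mod_cast (stmt1_general hh hf0 hf).norm_sub_le x y
end

section
/- Let d ≥ 1, let f : ℝ^d → ℝ^d satisfy f(0) = 0 and the local Lipschitz condition with nondecreasing constants L_R, and let h > 0. Then for all x, x̄ ∈ ℝ^d with |x| ≤ h < |x̄|, one has |f(x) − (|x̄|/h)·f(h·x̄/|x̄|)| ≤ 3·L_h·|x − x̄|. -/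
open Set

/-!
Let `z = (h / ‖y‖) • y` be the radial projection of `y` onto the sphere of radius `h`. Compare
`f x` with `(‖y‖ / h) • f z` through `f z`. As `‖y - z‖ = ‖y‖ - h ≤ ‖x - y‖`, we have
`‖x - z‖ ≤ 2 * ‖x - y‖`, so the Lipschitz condition on the ball bounds `‖f x - f z‖` by two of the
three multiples of `‖x - y‖`. The third pays for the rescaling: `f 0 = 0` gives `‖f z‖ ≤ K * h`,
and the factor `‖y‖ / h - 1` turns this into `K * (‖y‖ - h)`.
-/

section RadialProjection

variable {E : Type*} [SeminormedAddCommGroup E]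

theorem sub_le_norm_sub_of_norm_le {x : E} {r : ℝ} (hx : ‖x‖ ≤ r) (y : E) :
    ‖y‖ - r ≤ ‖x - y‖ :=
  calc ‖y‖ - r ≤ ‖y‖ - ‖x‖ := by gcongr
    _ ≤ ‖y - x‖ := norm_sub_norm_le y x
    _ = ‖x - y‖ := norm_sub_rev y x

variable [NormedSpace ℝ E]

theorem norm_div_norm_smul {y : E} (hy : ‖y‖ ≠ 0) (r : ℝ) : ‖(r / ‖y‖) • y‖ = |r| := by
  rw [norm_smul, norm_div, norm_norm, div_mul_cancel₀ _ hy, Real.norm_eq_abs]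

theorem norm_sub_div_norm_smul {y : E} (hy : ‖y‖ ≠ 0) (r : ℝ) :
    ‖y - (r / ‖y‖) • y‖ = |‖y‖ - r| := by
  rw [← norm_div_norm_smul hy, sub_div, div_self hy, sub_smul, one_smul]

theorem norm_sub_div_norm_smul_le_two_mul {x y : E} {r : ℝ} (hy : ‖y‖ ≠ 0) (hx : ‖x‖ ≤ r)
    (hry : r ≤ ‖y‖) : ‖x - (r / ‖y‖) • y‖ ≤ 2 * ‖x - y‖ :=
  calc ‖x - (r / ‖y‖) • y‖
    _ ≤ ‖x - y‖ + ‖y - (r / ‖y‖) • y‖ := norm_sub_le_norm_sub_add_norm_sub _ _ _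
    _ = ‖x - y‖ + (‖y‖ - r) := by
      rw [norm_sub_div_norm_smul hy, abs_of_nonneg (sub_nonneg.2 hry)]
    _ ≤ ‖x - y‖ + ‖x - y‖ := by gcongr; exact sub_le_norm_sub_of_norm_le hx y
    _ = 2 * ‖x - y‖ := (two_mul _).symm

theorem norm_sub_div_smul_le {v : E} {K r : ℝ} (hr : 0 < r) (hv : ‖v‖ ≤ K * r) (t : ℝ) :
    ‖v - (t / r) • v‖ ≤ K * |t - r| :=
  calc ‖v - (t / r) • v‖
    _ = ‖((t - r) / r) • v‖ := by
      rw [norm_sub_rev, sub_div, div_self hr.ne', sub_smul, one_smul]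
    _ = |t - r| / r * ‖v‖ := by
      rw [norm_smul, norm_div, Real.norm_eq_abs, Real.norm_of_nonneg hr.le]
    _ ≤ |t - r| / r * (K * r) := by gcongr
    _ = K * |t - r| := by field_simp

end RadialProjection

theorem stmt2_general {E F : Type*} [SeminormedAddCommGroup E] [NormedSpace ℝ E]
    [SeminormedAddCommGroup F] [NormedSpace ℝ F] {f : E → F} {K : NNReal} {h : ℝ} (hf0 : f 0 = 0)
    (hf : LipschitzOnWith K f (Metric.closedBall 0 h)) (hh : 0 < h) {x y : E} (hx : ‖x‖ ≤ h)
    (hy : h ≤ ‖y‖) :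
    ‖f x - (‖y‖ / h) • f ((h / ‖y‖) • y)‖ ≤ 3 * K * ‖x - y‖ := by
  have hy0 : ‖y‖ ≠ 0 := (hh.trans_le hy).ne'
  set z := (h / ‖y‖) • y
  have hz : ‖z‖ = h := (norm_div_norm_smul hy0 h).trans (abs_of_pos hh)
  have hz_mem : z ∈ Metric.closedBall 0 h := mem_closedBall_zero_iff.2 hz.le
  have norm_fz_le : ‖f z‖ ≤ K * h := by
    simpa only [hf0, sub_zero, hz] using hf.norm_sub_le hz_mem (Metric.mem_closedBall_self hh.le)
  have lipschitz_bound : ‖f x - f z‖ ≤ K * (2 * ‖x - y‖) :=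
    hf.norm_sub_le_of_le (mem_closedBall_zero_iff.2 hx) hz_mem
      (norm_sub_div_norm_smul_le_two_mul hy0 hx hy)
  have rescaling_bound : ‖f z - (‖y‖ / h) • f z‖ ≤ K * ‖x - y‖ :=
    (norm_sub_div_smul_le hh norm_fz_le ‖y‖).trans <| by
      rw [abs_of_nonneg (sub_nonneg.2 hy)]
      gcongr
      exact sub_le_norm_sub_of_norm_le hx y
  calc ‖f x - (‖y‖ / h) • f z‖
    _ ≤ ‖f x - f z‖ + ‖f z - (‖y‖ / h) • f z‖ := norm_sub_le_norm_sub_add_norm_sub _ _ _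
    _ ≤ K * (2 * ‖x - y‖) + K * ‖x - y‖ := add_le_add lipschitz_bound rescaling_bound
    _ = 3 * K * ‖x - y‖ := by ring

theorem stmt2 {d : ℕ} (hd : 1 ≤ d)
    (f : EuclideanSpace ℝ (Fin d) → EuclideanSpace ℝ (Fin d)) (hf0 : f 0 = 0)
    (L : ℝ → ℝ) (hLpos : ∀ R > (0:ℝ), 0 < L R) (hLmono : MonotoneOn L (Set.Ioi 0))
    (hlip : ∀ R > (0:ℝ), ∀ x y : EuclideanSpace ℝ (Fin d), ‖x‖ ≤ R → ‖y‖ ≤ R →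
      ‖f x - f y‖ ≤ L R * ‖x - y‖)
    (h : ℝ) (hh : 0 < h) :
    ∀ x y : EuclideanSpace ℝ (Fin d), ‖x‖ ≤ h → h < ‖y‖ →
      ‖f x - (‖y‖ / h) • f ((h / ‖y‖) • y)‖ ≤ 3 * L h * ‖x - y‖ := by
  have hf : LipschitzOnWith ⟨L h, (hLpos h hh).le⟩ f (Metric.closedBall 0 h) :=
    lipschitzOnWith_iff_norm_sub_le.2 fun x hx y hy ↦
      hlip h hh x y (mem_closedBall_zero_iff.1 hx) (mem_closedBall_zero_iff.1 hy)
  exact fun x y hx hy ↦ stmt2_general hf0 hf hh hx hy.le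
end

section
/- Let d ≥ 1, let f, g : ℝ^d → ℝ^d, let p ∈ (0,1), and let λ > 0. If Φ_{f,g}(x) ≤ −λ for all x ≠ 0, then for every h > 0 the modified truncated functions satisfy the same bound: Φ_{f_h, g_h}(x) ≤ −λ for all x ≠ 0. -/
open Set
open scoped RealInnerProductSpace

/-- The dissipativity functional `Φ_{f,g}`. -/
noncomputable def Phi {d : ℕ} (f g : EuclideanSpace ℝ (Fin d) → EuclideanSpace ℝ (Fin d))
    (p : ℝ) (x : EuclideanSpace ℝ (Fin d)) : ℝ :=
  (⟪x, f x⟫ + (1 / 2) * ‖g x‖ ^ 2) / ‖x‖ ^ 2 + ((p - 2) / 2) * ⟪x, g x⟫ ^ 2 / ‖x‖ ^ 4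

/-!
`Φ_{f,g}` is invariant under conjugation by a dilation: replacing `f`, `g` by `r f(·/r)`,
`r g(·/r)` and `x` by `r x` multiplies `⟨x, f⟩`, `|g|²`, `|x|²` and `⟨x, g⟩` by `r²`. At every `x`
the truncation is such a conjugation with `r = max 1 (|x|/h)`, so `Φ_{f_h,g_h}` takes at `x` the
value of `Φ_{f,g}` at `x / r`, the nearest point of the ball of radius `h`.
-/

section

variable {d : ℕ} (f g : EuclideanSpace ℝ (Fin d) → EuclideanSpace ℝ (Fin d)) (p : ℝ)

theorem trunc_eq_max_smul {h : ℝ} (hh : 0 < h) (x : EuclideanSpace ℝ (Fin d)) :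
    trunc f h x = max 1 (‖x‖ / h) • f ((max 1 (‖x‖ / h))⁻¹ • x) := by
  rw [trunc]
  split_ifs with hx
  · rw [max_eq_left ((div_le_one hh).2 hx), inv_one, one_smul, one_smul]
  · rw [max_eq_right ((one_le_div hh).2 (le_of_not_ge hx)), inv_div]

variable {f g} in
theorem Phi_smul_of_map_smul {F G : EuclideanSpace ℝ (Fin d) → EuclideanSpace ℝ (Fin d)}
    {r : ℝ} (hr : r ≠ 0) {y : EuclideanSpace ℝ (Fin d)}
    (hF : F (r • y) = r • f y) (hG : G (r • y) = r • g y) :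
    Phi F G p (r • y) = Phi f g p y := by
  have inner_scale (u : EuclideanSpace ℝ (Fin d)) : ⟪r • y, r • u⟫ = r ^ 2 * ⟪y, u⟫ := by
    rw [real_inner_smul_left, real_inner_smul_right]
    ring
  have norm_pow_scale {n : ℕ} (hn : Even n) (u : EuclideanSpace ℝ (Fin d)) :
      ‖r • u‖ ^ n = r ^ n * ‖u‖ ^ n := by
    rw [norm_smul, mul_pow, Real.norm_eq_abs, hn.pow_abs]
  have even_four : Even 4 := by decide
  simp only [Phi, hF, hG, inner_scale, norm_pow_scale even_two, norm_pow_scale even_four]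
  field_simp

theorem Phi_trunc {h : ℝ} (hh : 0 < h) (x : EuclideanSpace ℝ (Fin d)) :
    Phi (trunc f h) (trunc g h) p x = Phi f g p ((max 1 (‖x‖ / h))⁻¹ • x) := by
  set r := max 1 (‖x‖ / h)
  have hr : r ≠ 0 := by positivity
  have hx : r • r⁻¹ • x = x := smul_inv_smul₀ hr x
  have trunc_dilate (k : EuclideanSpace ℝ (Fin d) → EuclideanSpace ℝ (Fin d)) :
      trunc k h (r • r⁻¹ • x) = r • k (r⁻¹ • x) := by
    rw [hx]
    exact trunc_eq_max_smul k hh x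
  simpa only [hx] using Phi_smul_of_map_smul p hr (trunc_dilate f) (trunc_dilate g)

end

theorem stmt7_general {d : ℕ} (f g : EuclideanSpace ℝ (Fin d) → EuclideanSpace ℝ (Fin d))
    (p c : ℝ) (hPhi : ∀ x : EuclideanSpace ℝ (Fin d), x ≠ 0 → Phi f g p x ≤ c) :
    ∀ h > (0 : ℝ), ∀ x : EuclideanSpace ℝ (Fin d), x ≠ 0 →
      Phi (trunc f h) (trunc g h) p x ≤ c := by
  intro h hh x hx
  have hr : max 1 (‖x‖ / h) ≠ 0 := by positivity
  rw [Phi_trunc f g p hh]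
  exact hPhi _ (smul_ne_zero (inv_ne_zero hr) hx)

theorem stmt7 {d : ℕ} (hd : 1 ≤ d)
    (f g : EuclideanSpace ℝ (Fin d) → EuclideanSpace ℝ (Fin d))
    (p lam : ℝ) (hp : p ∈ Set.Ioo (0:ℝ) 1) (hlam : 0 < lam)
    (hPhi : ∀ x : EuclideanSpace ℝ (Fin d), x ≠ 0 → Phi f g p x ≤ -lam) :
    ∀ h > (0:ℝ), ∀ x : EuclideanSpace ℝ (Fin d), x ≠ 0 →
      Phi (trunc f h) (trunc g h) p x ≤ -lam :=
  stmt7_general f g p (-lam) hPhi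
end

section
/- Let p ∈ (0,1). Then for every real x ≥ −1, (1 + x)^{p/2} ≤ 1 + (p/2)·x + (p(p−2)/8)·x² + (p(p−2)(p−4)/48)·x³. -/
/-!
Taylor's theorem with Lagrange remainder for `t ↦ t ^ a` at `1` gives, for `x > -1`,
`(1 + x) ^ a - ∑ k ≤ n, choose a k * x ^ k = choose a (n + 1) * ξ ^ (a - (n + 1)) * x ^ (n + 1)`
with `ξ > 0`. For odd `n` the right-hand side has the sign of `choose a (n + 1)`, and continuity
extends the resulting inequality to `x = -1`. The theorem is the case `a = p / 2`, `n = 3`.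
-/

open Finset Set
open scoped Nat

lemma ringChoose_succ_right {K : Type*} [Field K] [CharZero K] (a : K) (n : ℕ) :
    Ring.choose a (n + 1) = Ring.choose a n * (a - n) / (n + 1) := by
  have h := Ring.choose_smul_choose a n.le_succ
  simp only [Nat.succ_eq_add_one, Nat.choose_succ_self_right, add_tsub_cancel_left,
    Ring.choose_one_right, nsmul_eq_mul, Nat.cast_add_one] at h
  rw [← h, mul_div_cancel_left₀ _ (Nat.cast_add_one_ne_zero n)]

lemma descPochhammer_eval_eq_factorial_mul_ringChoose {R : Type*} [CommRing R] [BinomialRing R]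
    (a : R) (n : ℕ) : (descPochhammer R n).eval a = n ! * Ring.choose a n := by
  rw [← nsmul_eq_mul, ← Ring.descPochhammer_eq_factorial_smul_choose,
    ← descPochhammer_map (algebraMap ℤ R), Polynomial.eval_map_algebraMap,
    Polynomial.aeval_eq_smeval]

lemma iteratedDeriv_rpow_const (a t : ℝ) (n : ℕ) :
    iteratedDeriv n (fun t : ℝ ↦ t ^ a) t = n ! * Ring.choose a n * t ^ (a - n) := by
  rw [iteratedDeriv_eq_iterate, Real.iter_deriv_rpow_const,
    descPochhammer_eval_eq_factorial_mul_ringChoose]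

lemma taylorWithinEval_rpow_const_one (a t : ℝ) (n : ℕ) {s : Set ℝ} (hs : UniqueDiffOn ℝ s)
    (h1 : 1 ∈ s) :
    taylorWithinEval (fun t : ℝ ↦ t ^ a) n s 1 t =
      ∑ k ∈ range (n + 1), Ring.choose a k * (t - 1) ^ k := by
  rw [taylor_within_apply]
  refine sum_congr rfl fun k _ ↦ ?_
  rw [iteratedDerivWithin_eq_iteratedDeriv hs (Real.contDiffAt_rpow_const_of_ne one_ne_zero) h1,
    iteratedDeriv_rpow_const, Real.one_rpow, smul_eq_mul]
  field_simp

lemma exists_one_add_rpow_sub_sum_ringChoose_eq (a : ℝ) (n : ℕ) {x : ℝ} (hx : -1 < x) :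
    ∃ ξ > 0, (1 + x) ^ a - ∑ k ∈ range (n + 1), Ring.choose a k * x ^ k =
      Ring.choose a (n + 1) * ξ ^ (a - (n + 1)) * x ^ (n + 1) := by
  rcases eq_or_ne x 0 with rfl | hx0
  · exact ⟨1, one_pos, by simp [sum_range_succ']⟩
  have hne : 1 ≠ 1 + x := by simpa using hx0
  have hpos : ∀ t ∈ uIcc 1 (1 + x), 0 < t := fun t ht ↦
    (lt_min one_pos (by linarith)).trans_le ht.1
  obtain ⟨ξ, hξ, h⟩ := taylor_mean_remainder_lagrange_iteratedDeriv (n := n) hne fun t ht ↦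
    (Real.contDiffAt_rpow_const_of_ne (p := a) (hpos t ht).ne').contDiffWithinAt
  refine ⟨ξ, hpos ξ (uIoo_subset_uIcc_self hξ), ?_⟩
  rw [taylorWithinEval_rpow_const_one a _ n (uniqueDiffOn_uIcc hne) left_mem_uIcc,
    iteratedDeriv_rpow_const, add_sub_cancel_left] at h
  rw [h]
  push_cast
  field_simp

lemma one_add_rpow_le_sum_ringChoose {a x : ℝ} {n : ℕ} (hn : Odd n) (ha : 0 ≤ a)
    (hchoose : Ring.choose a (n + 1) ≤ 0) (hx : -1 ≤ x) :
    (1 + x) ^ a ≤ ∑ k ∈ range (n + 1), Ring.choose a k * x ^ k := by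
  have hinterior : ∀ y ∈ Ioi (-1 : ℝ),
      (1 + y) ^ a ≤ ∑ k ∈ range (n + 1), Ring.choose a k * y ^ k := fun y hy ↦ by
    obtain ⟨ξ, hξ, h⟩ := exists_one_add_rpow_sub_sum_ringChoose_eq a n hy
    rw [← sub_nonpos, h]
    exact mul_nonpos_of_nonpos_of_nonneg
      (mul_nonpos_of_nonpos_of_nonneg hchoose (Real.rpow_nonneg hξ.le _)) (hn.add_one.pow_nonneg y)
  have hcont : Continuous fun y : ℝ ↦ (1 + y) ^ a :=
    (Real.continuous_rpow_const ha).comp (continuous_const_add 1)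
  exact le_on_closure hinterior hcont.continuousOn (by fun_prop) (by simpa using hx)

theorem stmt9_general {p x : ℝ} (hp : 0 ≤ p) (hcoeff : p * (p - 2) * (p - 4) * (p - 6) ≤ 0)
    (hx : -1 ≤ x) :
    (1 + x) ^ (p / 2) ≤ 1 + (p / 2) * x + (p * (p - 2) / 8) * x ^ 2
      + (p * (p - 2) * (p - 4) / 48) * x ^ 3 := by
  have h2 : Ring.choose (p / 2) 2 = p * (p - 2) / 8 := by
    rw [ringChoose_succ_right, Ring.choose_one_right]
    push_cast
    ring
  have h3 : Ring.choose (p / 2) 3 = p * (p - 2) * (p - 4) / 48 := by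
    rw [ringChoose_succ_right, h2]
    push_cast
    ring
  have h4 : Ring.choose (p / 2) 4 = p * (p - 2) * (p - 4) * (p - 6) / 384 := by
    rw [ringChoose_succ_right, h3]
    push_cast
    ring
  have h := one_add_rpow_le_sum_ringChoose (n := 3) (by decide) (by positivity)
    (h4.trans_le (by linarith)) hx
  simpa only [sum_range_succ, sum_range_zero, zero_add, Ring.choose_zero_right,
    Ring.choose_one_right, h2, h3, pow_zero, pow_one, mul_one] using h

theorem stmt9 (p : ℝ) (hp : p ∈ Set.Ioo (0:ℝ) 1) :
    ∀ x : ℝ, -1 ≤ x →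
      (1 + x) ^ (p / 2) ≤ 1 + (p / 2) * x + (p * (p - 2) / 8) * x ^ 2
        + (p * (p - 2) * (p - 4) / 48) * x ^ 3 := by
  obtain ⟨hp0, hp1⟩ := hp
  have hcubic : 0 ≤ p * (p - 2) * (p - 4) :=
    mul_nonneg_of_nonpos_of_nonpos (mul_nonpos_of_nonneg_of_nonpos hp0.le (by linarith))
      (by linarith)
  exact fun x ↦ stmt9_general hp0.le (mul_nonpos_of_nonneg_of_nonpos hcubic (by linarith))
end

section
/- Let d ≥ 1, let f, g : ℝ^d → ℝ^d satisfy f(0) = g(0) = 0 and the local Lipschitz condition with nondecreasing constants L_R, let p ∈ (0,1) and λ > 0 be such that Φ_{f,g}(x) ≤ −λ for all x ≠ 0, and let h : (0,Δ₀] → (0,∞) be decreasing with h(Δ) → ∞ and L_{h(Δ)}⁴·Δ → 0 as Δ → 0⁺. Then for every ε ∈ (0,λ) there exists Δ* ∈ (0,Δ₀] such that for every Δ ∈ (0,Δ*), the following holds on any probability space (Ω,ℱ,P): if 𝒢 ⊆ ℱ is a sub-σ-algebra, X is a 𝒢-measurable ℝ^d-valued random variable with E|X|^p < ∞, and ξ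 is a real Gaussian random variable with mean 0 and variance Δ independent of 𝒢, then E[|X + f_{h(Δ)}(X)·Δ + g_{h(Δ)}(X)·ξ|^p | 𝒢] ≤ (1 − p(λ−ε)Δ)·|X|^p almost surely. -/
open Set Filter MeasureTheory ProbabilityTheory
open scoped RealInnerProductSpace

open scoped NNReal Topology

/-!
Put `u = |x + Δ a + z b|² / |x|² - 1`. For `r = p / 2 ∈ [0, 1]` the third-order Taylor polynomial
of `(1 + u) ^ r` at `0` dominates `(1 + u) ^ r` on all of `u ≥ -1`, because the gap between the two
is convex with a critical point at `0`. Since `u` is a quadratic polynomial in `z`, integrating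
against the Gaussian law only requires its moments up to order six: the terms of order `Δ` add up
to `p Δ Φ(x)`, and when `|a|, |b| ≤ K |x|` with `K⁴ Δ ≤ 1` all others are at most a constant times
`p K⁴ Δ²`. Independence of `ξ` and `𝒢` turns the conditional expectation at `X = x` into this
Gaussian integral. Truncation preserves both the bound on `Φ`, which is homogeneous of degree `0`,
and the linear growth with `K = L_h`, so `L_{h(Δ)}⁴ Δ → 0` makes the remainder at most `p ε Δ`.
-/

lemma one_add_mul_sub_one_le_rpow_of_nonpos {y s : ℝ} (hy : 0 < y) (hs : s ≤ 0) :
    1 + s * (y - 1) ≤ y ^ s :=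
  calc 1 + s * (y - 1) ≤ Real.log y * s + 1 := by
        nlinarith [Real.log_le_sub_one_of_pos hy]
    _ ≤ Real.exp (Real.log y * s) := Real.add_one_le_exp _
    _ = y ^ s := (Real.rpow_def_of_pos hy s).symm

/-- The third-order Taylor polynomial of `y ↦ y ^ r` at `1`, minus `y ^ r` itself. -/
noncomputable def cubicTaylorGap (r y : ℝ) : ℝ :=
  1 + r * (y - 1) + r * (r - 1) / 2 * (y - 1) ^ 2 + r * (r - 1) * (r - 2) / 6 * (y - 1) ^ 3 - y ^ r

/-- The derivative of `cubicTaylorGap r` on the positive half-line. -/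
noncomputable def cubicTaylorGapDeriv (r y : ℝ) : ℝ :=
  r + r * (r - 1) * (y - 1) + r * (r - 1) * (r - 2) / 2 * (y - 1) ^ 2 - r * y ^ (r - 1)

lemma hasDerivAt_cubicTaylorGap (r : ℝ) {y : ℝ} (hy : 0 < y) :
    HasDerivAt (cubicTaylorGap r) (cubicTaylorGapDeriv r y) y := by
  have hsub : HasDerivAt (fun y : ℝ ↦ y - 1) 1 y := (hasDerivAt_id y).sub_const 1
  refine HasDerivAt.congr_deriv
    (((((hsub.const_mul r).const_add 1).add ((hsub.pow 2).const_mul _)).add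
      ((hsub.pow 3).const_mul _)).sub (Real.hasDerivAt_rpow_const (.inl hy.ne'))) ?_
  rw [cubicTaylorGapDeriv]
  push_cast
  ring

lemma hasDerivAt_cubicTaylorGapDeriv (r : ℝ) {y : ℝ} (hy : 0 < y) :
    HasDerivAt (cubicTaylorGapDeriv r)
      (r * (1 - r) * (y ^ (r - 2) - (1 + (r - 2) * (y - 1)))) y := by
  have hsub : HasDerivAt (fun y : ℝ ↦ y - 1) 1 y := (hasDerivAt_id y).sub_const 1
  refine HasDerivAt.congr_deriv
    ((((hsub.const_mul _).const_add r).add ((hsub.pow 2).const_mul _)).sub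
      ((Real.hasDerivAt_rpow_const (.inl hy.ne')).const_mul r)) ?_
  rw [show r - 1 - 1 = r - 2 by ring]
  push_cast
  ring

lemma convexOn_cubicTaylorGap {r : ℝ} (hr₀ : 0 ≤ r) (hr₁ : r ≤ 1) :
    ConvexOn ℝ (Ici 0) (cubicTaylorGap r) := by
  have hcont : Continuous (cubicTaylorGap r) := by
    have := Real.continuous_rpow_const hr₀
    unfold cubicTaylorGap
    fun_prop
  refine convexOn_of_hasDerivWithinAt2_nonneg (convex_Ici 0) hcont.continuousOn
    (fun y hy ↦ (hasDerivAt_cubicTaylorGap r (interior_Ici.subset hy)).hasDerivWithinAt)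
    (fun y hy ↦ (hasDerivAt_cubicTaylorGapDeriv r (interior_Ici.subset hy)).hasDerivWithinAt)
    fun y hy ↦ mul_nonneg (mul_nonneg hr₀ (sub_nonneg.2 hr₁)) (sub_nonneg.2 ?_)
  exact one_add_mul_sub_one_le_rpow_of_nonpos (interior_Ici.subset hy) (by linarith)

theorem rpow_one_add_le_cubicTaylor {r u : ℝ} (hr₀ : 0 ≤ r) (hr₁ : r ≤ 1) (hu : -1 ≤ u) :
    (1 + u) ^ r ≤
      1 + r * u + r * (r - 1) / 2 * u ^ 2 + r * (r - 1) * (r - 2) / 6 * u ^ 3 := by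
  have hderiv : derivWithin (cubicTaylorGap r) (Ioi 1) 1 = 0 := by
    rw [(hasDerivAt_cubicTaylorGap r one_pos).hasDerivWithinAt.derivWithin
      (uniqueDiffWithinAt_Ioi 1)]
    simp [cubicTaylorGapDeriv]
  have hmin : cubicTaylorGap r 1 ≤ cubicTaylorGap r (1 + u) :=
    (convexOn_cubicTaylorGap hr₀ hr₁).isMinOn_of_rightDeriv_eq_zero (by simp) hderiv
      (show 0 ≤ 1 + u by linarith)
  simp only [cubicTaylorGap, add_sub_cancel_left, sub_self, Real.one_rpow] at hmin
  linarith

theorem integral_rpow_one_add_le {Ω : Type*} [MeasurableSpace Ω] {μ : Measure Ω}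
    [IsProbabilityMeasure μ] {r : ℝ} (hr₀ : 0 ≤ r) (hr₁ : r ≤ 1) {u : Ω → ℝ} (hu : ∀ ω, -1 ≤ u ω)
    (h₁ : Integrable u μ) (h₂ : Integrable (fun ω ↦ u ω ^ 2) μ)
    (h₃ : Integrable (fun ω ↦ u ω ^ 3) μ) :
    ∫ ω, (1 + u ω) ^ r ∂μ ≤ 1 + r * ∫ ω, u ω ∂μ + r * (r - 1) / 2 * ∫ ω, u ω ^ 2 ∂μ
      + r * (r - 1) * (r - 2) / 6 * ∫ ω, u ω ^ 3 ∂μ := by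
  calc ∫ ω, (1 + u ω) ^ r ∂μ
      ≤ ∫ ω, (1 + r * u ω + r * (r - 1) / 2 * u ω ^ 2
        + r * (r - 1) * (r - 2) / 6 * u ω ^ 3) ∂μ := by
        refine integral_mono_of_nonneg (ae_of_all _ fun ω ↦ ?_) (by fun_prop)
          (ae_of_all _ fun ω ↦ rpow_one_add_le_cubicTaylor hr₀ hr₁ (hu ω))
        exact Real.rpow_nonneg (by linarith [hu ω]) r
    _ = _ := by
        rw [integral_add (by fun_prop) (by fun_prop), integral_add (by fun_prop) (by fun_prop),
          integral_add (by fun_prop) (by fun_prop)]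
        simp only [integral_const_mul, integral_const, probReal_univ, one_smul]

section GaussianMoments

variable (v : ℝ≥0)

lemma integrable_pow_gaussianReal (m : ℝ) (n : ℕ) :
    Integrable (fun z : ℝ ↦ z ^ n) (gaussianReal m v) :=
  integrable_pow_of_mem_interior_integrableExpSet (X := id) (by simp) n

lemma integral_pow_mul_exp_gaussianReal (n : ℕ) (t : ℝ) :
    ∫ z, z ^ (n + 1) * Real.exp (t * z) ∂gaussianReal 0 v =
      v * (t * ∫ z, z ^ n * Real.exp (t * z) ∂gaussianReal 0 v
        + n * ∫ z, z ^ (n - 1) * Real.exp (t * z) ∂gaussianReal 0 v) := by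
  have hderiv (n : ℕ) (t : ℝ) :
      HasDerivAt (fun t ↦ ∫ z, z ^ n * Real.exp (t * z) ∂gaussianReal 0 v)
        (∫ z, z ^ (n + 1) * Real.exp (t * z) ∂gaussianReal 0 v) t :=
    hasDerivAt_integral_pow_mul_exp_real (X := id) (by simp) n
  induction n generalizing t with
  | zero =>
    have hmgf (t : ℝ) :
        ∫ z, z ^ 0 * Real.exp (t * z) ∂gaussianReal 0 v = Real.exp (v * t ^ 2 / 2) := by
      simpa [mgf] using congrFun (mgf_id_gaussianReal (μ := 0) (v := v)) t
    have hexp : HasDerivAt (fun t : ℝ ↦ Real.exp (v * t ^ 2 / 2))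
        (v * t * Real.exp (v * t ^ 2 / 2)) t := by
      refine ((((hasDerivAt_id t).pow 2).const_mul (v : ℝ)).div_const 2).exp.congr_deriv ?_
      simp only [id, Pi.pow_apply]
      push_cast
      ring
    rw [((hderiv 0 t).congr_of_eventuallyEq (.of_forall fun t ↦ (hmgf t).symm)).unique hexp, hmgf]
    push_cast
    ring
  | succ n ih =>
    have hrhs := (((hasDerivAt_id t).mul (hderiv n t)).add
      ((hderiv (n - 1) t).const_mul (n : ℝ))).const_mul (v : ℝ)
    rw [((hderiv (n + 1) t).congr_of_eventuallyEq (.of_forall fun t ↦ (ih t).symm)).unique hrhs]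
    rcases n with - | n
    · simp [add_comm]
    · simp only [Nat.add_sub_cancel, id]
      push_cast
      ring

lemma integral_pow_add_two_gaussianReal (n : ℕ) :
    ∫ z, z ^ (n + 2) ∂gaussianReal 0 v = v * (n + 1) * ∫ z, z ^ n ∂gaussianReal 0 v := by
  simpa [mul_assoc] using integral_pow_mul_exp_gaussianReal v (n + 1) 0

lemma integrable_sum_mul_pow_gaussianReal {n : ℕ} (c : Fin n → ℝ) :
    Integrable (fun z ↦ ∑ i, c i * z ^ (i : ℕ)) (gaussianReal 0 v) :=
  integrable_finsetSum _ fun i _ ↦ (integrable_pow_gaussianReal v 0 i).const_mul (c i)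

lemma integral_sum_mul_pow_gaussianReal {n : ℕ} (c : Fin n → ℝ) :
    ∫ z, ∑ i, c i * z ^ (i : ℕ) ∂gaussianReal 0 v =
      ∑ i, c i * ∫ z, z ^ (i : ℕ) ∂gaussianReal 0 v := by
  rw [integral_finsetSum _ fun (i : Fin n) _ ↦
    (integrable_pow_gaussianReal v 0 i).const_mul (c i)]
  simp only [integral_const_mul]

lemma quadratic_sq_eq_sum (s t q z : ℝ) :
    (s + t * z + q * z ^ 2) ^ 2 =
      ∑ i, ![s ^ 2, 2 * s * t, t ^ 2 + 2 * s * q, 2 * t * q, q ^ 2] i * z ^ (i : ℕ) := by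
  simp only [Fin.sum_univ_five, Matrix.cons_val, Fin.coe_ofNat_eq_mod]
  ring

lemma quadratic_cube_eq_sum (s t q z : ℝ) :
    (s + t * z + q * z ^ 2) ^ 3 =
      ∑ i, ![s ^ 3, 3 * s ^ 2 * t, 3 * s * t ^ 2 + 3 * s ^ 2 * q, t ^ 3 + 6 * s * t * q,
        3 * t ^ 2 * q + 3 * s * q ^ 2, 3 * t * q ^ 2, q ^ 3] i * z ^ (i : ℕ) := by
  simp only [Fin.sum_univ_seven, Matrix.cons_val, Fin.coe_ofNat_eq_mod]
  ring

lemma integral_quadratic_gaussianReal (s t q : ℝ) :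
    ∫ z, (s + t * z + q * z ^ 2) ∂gaussianReal 0 v = s + q * v := by
  have h := integral_sum_mul_pow_gaussianReal v ![s, t, q]
  simpa [Fin.sum_univ_succ, integral_pow_add_two_gaussianReal, ← add_assoc] using h

lemma integral_quadratic_sq_gaussianReal (s t q : ℝ) :
    ∫ z, (s + t * z + q * z ^ 2) ^ 2 ∂gaussianReal 0 v =
      s ^ 2 + (t ^ 2 + 2 * s * q) * v + 3 * q ^ 2 * v ^ 2 := by
  simp only [quadratic_sq_eq_sum]
  rw [integral_sum_mul_pow_gaussianReal]
  simp only [Fin.sum_univ_five, Matrix.cons_val, Fin.coe_ofNat_eq_mod, Nat.zero_mod, Nat.one_mod,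
    pow_zero, pow_one, integral_pow_add_two_gaussianReal, integral_id_gaussianReal,
    integral_const, probReal_univ, one_smul]
  push_cast
  ring

lemma integral_quadratic_cube_gaussianReal (s t q : ℝ) :
    ∫ z, (s + t * z + q * z ^ 2) ^ 3 ∂gaussianReal 0 v =
      s ^ 3 + 3 * (s * t ^ 2 + s ^ 2 * q) * v + 9 * (t ^ 2 * q + s * q ^ 2) * v ^ 2
        + 15 * q ^ 3 * v ^ 3 := by
  simp only [quadratic_cube_eq_sum]
  rw [integral_sum_mul_pow_gaussianReal]
  simp only [Fin.sum_univ_seven, Matrix.cons_val, Fin.coe_ofNat_eq_mod, Nat.zero_mod, Nat.one_mod,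
    pow_zero, pow_one, integral_pow_add_two_gaussianReal, integral_id_gaussianReal,
    integral_const, probReal_univ, one_smul]
  push_cast
  ring

end GaussianMoments

section EulerStep

variable {E : Type*} [NormedAddCommGroup E] [InnerProductSpace ℝ E]

lemma abs_inner_le_of_norm_le {x y : E} {A B : ℝ} (hx : ‖x‖ ≤ A) (hy : ‖y‖ ≤ B) :
    |⟪x, y⟫| ≤ A * B :=
  (abs_real_inner_le_norm x y).trans
    (mul_le_mul hx hy (norm_nonneg y) ((norm_nonneg x).trans hx))

/-- The increment of the squared norm in the Euler–Maruyama step `x ↦ x + Δ • a + z • b` with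
drift `a`, diffusion `b`, step size `Δ` and noise `z`. -/
noncomputable def normSqIncrement (x a b : E) (Δ z : ℝ) : ℝ :=
  ‖x + Δ • a + z • b‖ ^ 2 - ‖x‖ ^ 2

lemma normSqIncrement_eq_quadratic (x a b : E) (Δ z : ℝ) :
    normSqIncrement x a b Δ z = (2 * Δ * ⟪x, a⟫ + Δ ^ 2 * ‖a‖ ^ 2)
      + (2 * ⟪x, b⟫ + 2 * Δ * ⟪a, b⟫) * z + ‖b‖ ^ 2 * z ^ 2 := by
  rw [normSqIncrement, norm_add_sq_real, norm_add_sq_real, inner_add_left]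
  simp only [real_inner_smul_left, real_inner_smul_right, norm_smul, mul_pow, Real.norm_eq_abs,
    sq_abs]
  ring

lemma neg_one_le_normSqIncrement {x : E} (hx : ‖x‖ = 1) (a b : E) (Δ z : ℝ) :
    -1 ≤ normSqIncrement x a b Δ z := by
  rw [normSqIncrement, hx]
  linarith [sq_nonneg ‖x + Δ • a + z • b‖]

lemma norm_rpow_eq_rpow_one_add_normSqIncrement {x : E} (hx : ‖x‖ = 1) (a b : E) (Δ z p : ℝ) :
    ‖x + Δ • a + z • b‖ ^ p = (1 + normSqIncrement x a b Δ z) ^ (p / 2) := by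
  rw [normSqIncrement, hx, one_pow, add_sub_cancel, ← Real.rpow_natCast,
    ← Real.rpow_mul (norm_nonneg _)]
  congr 1
  push_cast
  ring

section Moments

variable {x a b : E} {K : ℝ} {Δ : ℝ≥0}

lemma integrable_normSqIncrement :
    Integrable (normSqIncrement x a b Δ) (gaussianReal 0 Δ) := by
  refine (integrable_sum_mul_pow_gaussianReal Δ ![2 * Δ * ⟪x, a⟫ + Δ ^ 2 * ‖a‖ ^ 2,
    2 * ⟪x, b⟫ + 2 * Δ * ⟪a, b⟫, ‖b‖ ^ 2]).congr (.of_forall fun z ↦ ?_)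
  simp [normSqIncrement_eq_quadratic, Fin.sum_univ_three]

lemma integrable_normSqIncrement_sq :
    Integrable (fun z ↦ normSqIncrement x a b Δ z ^ 2) (gaussianReal 0 Δ) := by
  simp only [normSqIncrement_eq_quadratic, quadratic_sq_eq_sum]
  exact integrable_sum_mul_pow_gaussianReal Δ _

lemma integrable_normSqIncrement_cube :
    Integrable (fun z ↦ normSqIncrement x a b Δ z ^ 3) (gaussianReal 0 Δ) := by
  simp only [normSqIncrement_eq_quadratic, quadratic_cube_eq_sum]
  exact integrable_sum_mul_pow_gaussianReal Δ _

lemma integral_normSqIncrement :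
    ∫ z, normSqIncrement x a b Δ z ∂gaussianReal 0 Δ =
      2 * Δ * ⟪x, a⟫ + Δ ^ 2 * ‖a‖ ^ 2 + ‖b‖ ^ 2 * Δ := by
  simp only [normSqIncrement_eq_quadratic, integral_quadratic_gaussianReal]

lemma pow_mul_le_one_of_pow_four_mul_le_one (hK : 1 ≤ K) (hKΔ : K ^ 4 * Δ ≤ 1) {n : ℕ}
    (hn : n ≤ 4) : K ^ n * Δ ≤ 1 :=
  le_trans (by gcongr) hKΔ

lemma abs_normSqIncrement_constCoeff_le (hK : 1 ≤ K) (hKΔ : K ^ 4 * Δ ≤ 1) (hx : ‖x‖ ≤ 1)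
    (ha : ‖a‖ ≤ K) : |2 * Δ * ⟪x, a⟫ + Δ ^ 2 * ‖a‖ ^ 2| ≤ 3 * (K * Δ) := by
  have hKΔ₁ : K * Δ ≤ 1 := by simpa using pow_mul_le_one_of_pow_four_mul_le_one hK hKΔ (n := 1)
  have hxa := abs_inner_le_of_norm_le hx ha
  calc |2 * Δ * ⟪x, a⟫ + Δ ^ 2 * ‖a‖ ^ 2|
      ≤ |2 * Δ * ⟪x, a⟫| + |(Δ : ℝ) ^ 2 * ‖a‖ ^ 2| := abs_add_le _ _
    _ = 2 * Δ * |⟪x, a⟫| + Δ ^ 2 * ‖a‖ ^ 2 := by simp [abs_mul]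
    _ ≤ 2 * Δ * (1 * K) + Δ ^ 2 * K ^ 2 := by gcongr
    _ = 2 * (K * Δ) + K * Δ * (K * Δ) := by ring
    _ ≤ 3 * (K * Δ) := by nlinarith [mul_nonneg (zero_le_one.trans hK) Δ.coe_nonneg]

lemma abs_normSqIncrement_linCoeff_le (hK : 1 ≤ K) (hKΔ : K ^ 4 * Δ ≤ 1) (hx : ‖x‖ ≤ 1)
    (ha : ‖a‖ ≤ K) (hb : ‖b‖ ≤ K) : |2 * ⟪x, b⟫ + 2 * Δ * ⟪a, b⟫| ≤ 4 * K := by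
  have hKΔ₂ : K ^ 2 * Δ ≤ 1 := pow_mul_le_one_of_pow_four_mul_le_one hK hKΔ (by norm_num)
  have hxb := abs_inner_le_of_norm_le hx hb
  have hab := abs_inner_le_of_norm_le ha hb
  calc |2 * ⟪x, b⟫ + 2 * Δ * ⟪a, b⟫| ≤ |2 * ⟪x, b⟫| + |2 * Δ * ⟪a, b⟫| := abs_add_le _ _
    _ = 2 * |⟪x, b⟫| + 2 * Δ * |⟪a, b⟫| := by simp [abs_mul]
    _ ≤ 2 * (1 * K) + 2 * Δ * (K * K) := by gcongr
    _ ≤ 4 * K := by linarith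

lemma le_integral_normSqIncrement_sq (hK : 1 ≤ K) (hKΔ : K ^ 4 * Δ ≤ 1) (hx : ‖x‖ ≤ 1)
    (ha : ‖a‖ ≤ K) (hb : ‖b‖ ≤ K) :
    4 * ⟪x, b⟫ ^ 2 * Δ - 14 * (K ^ 4 * Δ ^ 2) ≤
      ∫ z, normSqIncrement x a b Δ z ^ 2 ∂gaussianReal 0 Δ := by
  simp only [normSqIncrement_eq_quadratic, integral_quadratic_sq_gaussianReal]
  have hs := abs_normSqIncrement_constCoeff_le hK hKΔ hx ha
  set s := 2 * Δ * ⟪x, a⟫ + Δ ^ 2 * ‖a‖ ^ 2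
  have hK₃ : K ^ 3 * Δ ^ 2 ≤ K ^ 4 * Δ ^ 2 := by gcongr; simp
  have hcross : -(⟪x, b⟫ * ⟪a, b⟫) * Δ ^ 2 ≤ K ^ 4 * Δ ^ 2 := by
    have hxb := abs_inner_le_of_norm_le hx hb
    have hab := abs_inner_le_of_norm_le ha hb
    calc -(⟪x, b⟫ * ⟪a, b⟫) * Δ ^ 2 ≤ |⟪x, b⟫ * ⟪a, b⟫| * Δ ^ 2 := by
          gcongr; exact neg_le_abs _
      _ ≤ (1 * K) * (K * K) * Δ ^ 2 := by rw [abs_mul]; gcongr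
      _ = K ^ 3 * Δ ^ 2 := by ring
      _ ≤ K ^ 4 * Δ ^ 2 := hK₃
  have hconst : -s * ‖b‖ ^ 2 * Δ ≤ 3 * (K ^ 4 * Δ ^ 2) :=
    calc -s * ‖b‖ ^ 2 * Δ ≤ 3 * (K * Δ) * K ^ 2 * Δ := by
          gcongr; exact (neg_le_abs s).trans hs
      _ = 3 * (K ^ 3 * Δ ^ 2) := by ring
      _ ≤ 3 * (K ^ 4 * Δ ^ 2) := by gcongr
  have hsquares : 0 ≤ s ^ 2 + 4 * Δ ^ 3 * ⟪a, b⟫ ^ 2 + 3 * (‖b‖ ^ 2) ^ 2 * Δ ^ 2 := by positivity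
  linarith

lemma integral_quadratic_cube_gaussianReal_le {s t q : ℝ} (hK : 1 ≤ K) (hKΔ : K ^ 4 * Δ ≤ 1)
    (hs : |s| ≤ 3 * (K * Δ)) (ht : |t| ≤ 4 * K) (hq₀ : 0 ≤ q) (hq : q ≤ K ^ 2) :
    ∫ z, (s + t * z + q * z ^ 2) ^ 3 ∂gaussianReal 0 Δ ≤ 384 * (K ^ 4 * Δ ^ 2) := by
  rw [integral_quadratic_cube_gaussianReal]
  have hK₂Δ : K ^ 2 * Δ ≤ 1 := pow_mul_le_one_of_pow_four_mul_le_one hK hKΔ (by norm_num)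
  calc s ^ 3 + 3 * (s * t ^ 2 + s ^ 2 * q) * Δ + 9 * (t ^ 2 * q + s * q ^ 2) * Δ ^ 2
        + 15 * q ^ 3 * Δ ^ 3
      ≤ |s| ^ 3 + 3 * (|s| * |t| ^ 2 + |s| ^ 2 * q) * Δ
        + 9 * (|t| ^ 2 * q + |s| * q ^ 2) * Δ ^ 2 + 15 * q ^ 3 * Δ ^ 3 := by
        rw [sq_abs, sq_abs, ← abs_pow]
        gcongr <;> exact le_abs_self _
    _ ≤ (3 * (K * Δ)) ^ 3 + 3 * (3 * (K * Δ) * (4 * K) ^ 2 + (3 * (K * Δ)) ^ 2 * K ^ 2) * Δ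
        + 9 * ((4 * K) ^ 2 * K ^ 2 + 3 * (K * Δ) * (K ^ 2) ^ 2) * Δ ^ 2
        + 15 * (K ^ 2) ^ 3 * Δ ^ 3 := by gcongr
    _ = 144 * (K ^ 3 * Δ ^ 2 + K ^ 4 * Δ ^ 2)
        + (27 * (K ^ 3 + K ^ 4 + K ^ 5) + 15 * K ^ 6) * Δ ^ 3 := by ring
    _ ≤ 144 * (K ^ 4 * Δ ^ 2 + K ^ 4 * Δ ^ 2)
        + (27 * (K ^ 6 + K ^ 6 + K ^ 6) + 15 * K ^ 6) * Δ ^ 3 := by gcongr <;> norm_num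
    _ = 288 * (K ^ 4 * Δ ^ 2) + 96 * (K ^ 4 * Δ ^ 2) * (K ^ 2 * Δ) := by ring
    _ ≤ 288 * (K ^ 4 * Δ ^ 2) + 96 * (K ^ 4 * Δ ^ 2) * 1 := by gcongr
    _ = 384 * (K ^ 4 * Δ ^ 2) := by ring

lemma integral_normSqIncrement_cube_le (hK : 1 ≤ K) (hKΔ : K ^ 4 * Δ ≤ 1) (hx : ‖x‖ ≤ 1)
    (ha : ‖a‖ ≤ K) (hb : ‖b‖ ≤ K) :
    ∫ z, normSqIncrement x a b Δ z ^ 3 ∂gaussianReal 0 Δ ≤ 384 * (K ^ 4 * Δ ^ 2) := by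
  simp only [normSqIncrement_eq_quadratic]
  exact integral_quadratic_cube_gaussianReal_le hK hKΔ
    (abs_normSqIncrement_constCoeff_le hK hKΔ hx ha)
    (abs_normSqIncrement_linCoeff_le hK hKΔ hx ha hb) (by positivity) (by gcongr)

end Moments

/-- The value `Φ_{f,g}(x)` as a function of the vectors `a = f x` and `b = g x`. -/
noncomputable def dissipation (p : ℝ) (x a b : E) : ℝ :=
  (⟪x, a⟫ + (1 / 2) * ‖b‖ ^ 2) / ‖x‖ ^ 2 + ((p - 2) / 2) * ⟪x, b⟫ ^ 2 / ‖x‖ ^ 4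

lemma dissipation_smul (p : ℝ) {c : ℝ} (hc : c ≠ 0) (x a b : E) :
    dissipation p (c • x) (c • a) (c • b) = dissipation p x a b := by
  simp only [dissipation, real_inner_smul_left, real_inner_smul_right, norm_smul, mul_pow,
    Real.norm_eq_abs, Even.pow_abs (show Even 4 by decide), sq_abs]
  rcases eq_or_ne x 0 with rfl | hx
  · simp
  have := norm_pos_iff.2 hx
  field_simp

lemma integral_norm_rpow_le_of_norm_eq_one {x a b : E} {p K : ℝ} {Δ : ℝ≥0} (hp₀ : 0 ≤ p)
    (hp₂ : p ≤ 2) (hK : 1 ≤ K) (hKΔ : K ^ 4 * Δ ≤ 1) (hx : ‖x‖ = 1) (ha : ‖a‖ ≤ K)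
    (hb : ‖b‖ ≤ K) :
    ∫ z, ‖x + (Δ : ℝ) • a + z • b‖ ^ p ∂gaussianReal 0 Δ ≤
      1 + p * Δ * dissipation p x a b + 68 * p * (K ^ 4 * Δ ^ 2) := by
  have hTaylor := integral_rpow_one_add_le (r := p / 2) (by linarith) (by linarith)
    (neg_one_le_normSqIncrement hx a b Δ) integrable_normSqIncrement
    integrable_normSqIncrement_sq integrable_normSqIncrement_cube
  simp only [← norm_rpow_eq_rpow_one_add_normSqIncrement hx, integral_normSqIncrement] at hTaylor
  have hquad := le_integral_normSqIncrement_sq hK hKΔ hx.le ha hb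
  have hcube := integral_normSqIncrement_cube_le hK hKΔ hx.le ha hb
  have hdrift : (Δ : ℝ) ^ 2 * ‖a‖ ^ 2 ≤ K ^ 4 * Δ ^ 2 := by
    rw [mul_comm]
    gcongr
    exact (pow_le_pow_left₀ (norm_nonneg a) ha 2).trans (pow_le_pow_right₀ hK (by norm_num))
  have hΦ : dissipation p x a b = ⟪x, a⟫ + ‖b‖ ^ 2 / 2 + (p - 2) / 2 * ⟪x, b⟫ ^ 2 := by
    simp only [dissipation, hx]; ring
  set M := K ^ 4 * (Δ : ℝ) ^ 2
  set I₂ := ∫ z, normSqIncrement x a b Δ z ^ 2 ∂gaussianReal 0 Δ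
  set I₃ := ∫ z, normSqIncrement x a b Δ z ^ 3 ∂gaussianReal 0 Δ
  have hw : 0 ≤ p / 2 * (1 - p / 2) := mul_nonneg (by linarith) (by linarith)
  have hw' : p / 2 * (1 - p / 2) ≤ p / 2 := mul_le_of_le_one_right (by linarith) (by linarith)
  have hdrift' : p / 2 * (Δ ^ 2 * ‖a‖ ^ 2) ≤ p / 2 * M := by gcongr
  have hquad' : p / 2 * (1 - p / 2) / 2 * (4 * ⟪x, b⟫ ^ 2 * Δ - I₂) ≤ 7 / 2 * p * M :=
    calc p / 2 * (1 - p / 2) / 2 * (4 * ⟪x, b⟫ ^ 2 * Δ - I₂)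
        ≤ p / 2 * (1 - p / 2) / 2 * (14 * M) := by gcongr; linarith
      _ ≤ p / 2 / 2 * (14 * M) := by gcongr
      _ = 7 / 2 * p * M := by ring
  have hcube' : p / 2 * (1 - p / 2) * (2 - p / 2) / 6 * I₃ ≤ 64 * p * M :=
    calc p / 2 * (1 - p / 2) * (2 - p / 2) / 6 * I₃
        ≤ p / 2 * (1 - p / 2) * (2 - p / 2) / 6 * (384 * M) :=
          mul_le_mul_of_nonneg_left hcube
            (div_nonneg (mul_nonneg hw (by linarith)) (by norm_num))
      _ ≤ p / 2 * 2 / 6 * (384 * M) := by gcongr <;> linarith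
      _ = 64 * p * M := by ring
  rw [hΦ]
  -- The three errors add up to `(1 / 2 + 7 / 2 + 64) * p * M`.
  linarith

theorem integral_norm_rpow_le {x a b : E} {p K : ℝ} {Δ : ℝ≥0} (hp₀ : 0 ≤ p) (hp₂ : p ≤ 2)
    (hK : 1 ≤ K) (hKΔ : K ^ 4 * Δ ≤ 1) (hx : x ≠ 0) (ha : ‖a‖ ≤ K * ‖x‖) (hb : ‖b‖ ≤ K * ‖x‖) :
    ∫ z, ‖x + (Δ : ℝ) • a + z • b‖ ^ p ∂gaussianReal 0 Δ ≤
      (1 + p * Δ * dissipation p x a b + 68 * p * (K ^ 4 * Δ ^ 2)) * ‖x‖ ^ p := by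
  have hx₀ : 0 < ‖x‖ := norm_pos_iff.2 hx
  have hnorm {y : E} (hy : ‖y‖ ≤ K * ‖x‖) : ‖‖x‖⁻¹ • y‖ ≤ K := by
    rwa [norm_smul, norm_inv, norm_norm, inv_mul_le_iff₀' hx₀]
  have hscale (z : ℝ) : ‖x + (Δ : ℝ) • a + z • b‖ ^ p =
      ‖‖x‖⁻¹ • x + (Δ : ℝ) • ‖x‖⁻¹ • a + z • ‖x‖⁻¹ • b‖ ^ p * ‖x‖ ^ p := by
    rw [smul_comm _ ‖x‖⁻¹, smul_comm z, ← smul_add, ← smul_add, norm_smul, norm_inv, norm_norm,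
      ← Real.mul_rpow (by positivity) hx₀.le, mul_right_comm, inv_mul_cancel₀ hx₀.ne', one_mul]
  simp only [hscale, integral_mul_const]
  gcongr
  rw [← dissipation_smul p (inv_ne_zero hx₀.ne') x a b]
  exact integral_norm_rpow_le_of_norm_eq_one hp₀ hp₂ hK hKΔ (norm_smul_inv_norm (𝕜 := ℝ) hx)
    (hnorm ha) (hnorm hb)

end EulerStep

section Freezing

variable {Ω β S F : Type*} {𝒢 mΩ : MeasurableSpace Ω} [mβ : MeasurableSpace β]
  [mS : MeasurableSpace S] [StandardBorelSpace S] [NormedAddCommGroup F] [NormedSpace ℝ F]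
  [CompleteSpace F] {μ : Measure Ω} [IsProbabilityMeasure μ] {X : Ω → β} {ξ : Ω → S}
  {φ : β × S → F}

lemma condDistrib_ae_eq_const_of_indepFun [Nonempty S] (hX : Measurable X) (hξ : Measurable ξ)
    (hindep : IndepFun X ξ μ) :
    condDistrib ξ X μ =ᵐ[μ.map X] Kernel.const β (μ.map ξ) := by
  refine condDistrib_ae_eq_of_measure_eq_compProd X hξ.aemeasurable ?_
  rw [Measure.compProd_const]
  exact (indepFun_iff_map_prod_eq_prod_map_map hX.aemeasurable hξ.aemeasurable).1 hindep

lemma condExp_comap_ae_eq_integral_map_of_indepFun (hX : Measurable X) (hξ : Measurable ξ)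
    (hindep : IndepFun X ξ μ) (hφ : StronglyMeasurable φ)
    (hint : Integrable (fun ω ↦ φ (X ω, ξ ω)) μ) :
    μ[fun ω ↦ φ (X ω, ξ ω) | mβ.comap X] =ᵐ[μ] fun ω ↦ ∫ y, φ (X ω, y) ∂μ.map ξ := by
  have : Nonempty S := μ.nonempty_of_neZero.map ξ
  filter_upwards [condExp_prod_ae_eq_integral_condDistrib hX hξ.aemeasurable hφ hint,
    ae_of_ae_map hX.aemeasurable (condDistrib_ae_eq_const_of_indepFun hX hξ hindep)]
    with ω hω hdistrib
  rw [hω, hdistrib, Kernel.const_apply]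

/- `𝒢` is the σ-algebra generated by the identity `(Ω, mΩ) → (Ω, 𝒢)`. -/
theorem condExp_ae_eq_integral_map_of_indep (h𝒢 : 𝒢 ≤ mΩ) (hX : Measurable[𝒢] X)
    (hξ : Measurable ξ) (hindep : Indep (mS.comap ξ) 𝒢 μ) (hφ : StronglyMeasurable φ)
    (hint : Integrable (fun ω ↦ φ (X ω, ξ ω)) μ) :
    μ[fun ω ↦ φ (X ω, ξ ω) | 𝒢] =ᵐ[μ] fun ω ↦ ∫ y, φ (X ω, y) ∂μ.map ξ := by
  have hindepFun : @IndepFun Ω Ω S mΩ 𝒢 mS id ξ μ := by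
    refine (@IndepFun_iff_Indep Ω Ω S mΩ 𝒢 mS id ξ μ).2 ?_
    rw [MeasurableSpace.comap_id]
    exact hindep.symm
  have hφX : @StronglyMeasurable (Ω × S) F _ (@Prod.instMeasurableSpace Ω S 𝒢 mS)
      fun q ↦ φ (X q.1, q.2) :=
    hφ.comp_measurable
      ((hX.comp (@measurable_fst Ω S 𝒢 mS)).prodMk (@measurable_snd Ω S 𝒢 mS))
  have hcond := @condExp_comap_ae_eq_integral_map_of_indepFun Ω Ω S F mΩ 𝒢 mS _ _ _ _ μ _ id ξ _
    (measurable_id'' h𝒢) hξ hindepFun hφX hint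
  rwa [MeasurableSpace.comap_id] at hcond

end Freezing

section OneStep

section NormedSpace

variable {E : Type*} [NormedAddCommGroup E] [NormedSpace ℝ E]

lemma norm_add_smul_add_smul_rpow_le {x a b : E} {p K t z : ℝ} (hp₀ : 0 ≤ p) (hp₂ : p ≤ 2)
    (hK : 0 ≤ K) (ha : ‖a‖ ≤ K * ‖x‖) (hb : ‖b‖ ≤ K * ‖x‖) :
    ‖x + t • a + z • b‖ ^ p ≤ ‖x‖ ^ p * (1 + |t| * K + K * |z|) ^ 2 := by
  have hbase : 1 ≤ 1 + |t| * K + K * |z| := by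
    rw [add_assoc]
    exact le_add_of_nonneg_right (by positivity)
  have hnorm : ‖x + t • a + z • b‖ ≤ ‖x‖ * (1 + |t| * K + K * |z|) :=
    calc ‖x + t • a + z • b‖ ≤ ‖x‖ + |t| * ‖a‖ + |z| * ‖b‖ := by
          simpa only [norm_smul, Real.norm_eq_abs] using norm_add₃_le (a := x) (b := t • a)
            (c := z • b)
      _ ≤ ‖x‖ + |t| * (K * ‖x‖) + |z| * (K * ‖x‖) := by gcongr
      _ = ‖x‖ * (1 + |t| * K + K * |z|) := by ring
  calc ‖x + t • a + z • b‖ ^ p ≤ (‖x‖ * (1 + |t| * K + K * |z|)) ^ p := by gcongr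
    _ = ‖x‖ ^ p * (1 + |t| * K + K * |z|) ^ p :=
        Real.mul_rpow (norm_nonneg x) (zero_le_one.trans hbase)
    _ ≤ ‖x‖ ^ p * (1 + |t| * K + K * |z|) ^ (2 : ℝ) := by
        gcongr
    _ = ‖x‖ ^ p * (1 + |t| * K + K * |z|) ^ 2 := by rw [Real.rpow_two]

variable [MeasurableSpace E] [BorelSpace E] [SecondCountableTopology E]

lemma measurable_norm_add_smul_add_smul_rpow {a b : E → E} (ha : Measurable a) (hb : Measurable b)
    (t p : ℝ) : Measurable fun q : E × ℝ ↦ ‖q.1 + t • a q.1 + q.2 • b q.1‖ ^ p := by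
  fun_prop

lemma integrable_norm_add_smul_add_smul_rpow {Ω : Type*} [MeasurableSpace Ω] {μ : Measure Ω}
    [IsFiniteMeasure μ] {a b : E → E} {X : Ω → E} {ξ : Ω → ℝ} {p K : ℝ} (t : ℝ) (hp₀ : 0 ≤ p)
    (hp₂ : p ≤ 2) (hK : 0 ≤ K) (ha : Measurable a) (hb : Measurable b)
    (ha_le : ∀ x, ‖a x‖ ≤ K * ‖x‖) (hb_le : ∀ x, ‖b x‖ ≤ K * ‖x‖) (hX : Measurable X)
    (hXp : Integrable (fun ω ↦ ‖X ω‖ ^ p) μ) (hξ : MemLp ξ 2 μ) (hξm : Measurable ξ)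
    (hindep : IndepFun X ξ μ) :
    Integrable (fun ω ↦ ‖X ω + t • a (X ω) + ξ ω • b (X ω)‖ ^ p) μ := by
  have hbase : MemLp (fun ω ↦ 1 + |t| * K + K * |ξ ω|) 2 μ :=
    (memLp_const (1 + |t| * K)).add (hξ.abs.const_mul K)
  have hprod : Integrable (fun ω ↦ ‖X ω‖ ^ p * (1 + |t| * K + K * |ξ ω|) ^ 2) μ :=
    (hindep.comp (φ := fun x ↦ ‖x‖ ^ p) (ψ := fun z ↦ (1 + |t| * K + K * |z|) ^ 2)
      (by fun_prop) (by fun_prop)).integrable_mul hXp hbase.integrable_sq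
  have hmeas : Measurable fun ω ↦ ‖X ω + t • a (X ω) + ξ ω • b (X ω)‖ ^ p :=
    (measurable_norm_add_smul_add_smul_rpow ha hb t p).comp (hX.prodMk hξm)
  refine hprod.mono' hmeas.aestronglyMeasurable (.of_forall fun ω ↦ ?_)
  rw [Real.norm_of_nonneg (by positivity)]
  exact norm_add_smul_add_smul_rpow_le hp₀ hp₂ hK (ha_le _) (hb_le _)

end NormedSpace

variable {E : Type*} [NormedAddCommGroup E] [InnerProductSpace ℝ E]

lemma integral_norm_rpow_le_of_dissipation_le {x a b : E} {p K lam ε : ℝ} {Δ : ℝ≥0} (hp₀ : 0 < p)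
    (hp₂ : p ≤ 2) (hK : 1 ≤ K) (hKΔ : K ^ 4 * Δ ≤ 1) (hKε : 68 * (K ^ 4 * Δ) ≤ ε)
    (ha : ‖a‖ ≤ K * ‖x‖) (hb : ‖b‖ ≤ K * ‖x‖) (hdiss : x ≠ 0 → dissipation p x a b ≤ -lam) :
    ∫ z, ‖x + (Δ : ℝ) • a + z • b‖ ^ p ∂gaussianReal 0 Δ ≤
      (1 - p * (lam - ε) * Δ) * ‖x‖ ^ p := by
  rcases eq_or_ne x 0 with rfl | hx
  · have ha₀ : a = 0 := by simpa using ha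
    have hb₀ : b = 0 := by simpa using hb
    simp [ha₀, hb₀, Real.zero_rpow hp₀.ne']
  refine (integral_norm_rpow_le hp₀.le hp₂ hK hKΔ hx ha hb).trans ?_
  gcongr
  have hdrift : p * Δ * dissipation p x a b ≤ p * Δ * -lam := by gcongr; exact hdiss hx
  have herror : p * Δ * (68 * (K ^ 4 * Δ)) ≤ p * Δ * ε := by gcongr
  linarith

theorem condExp_norm_rpow_le_of_dissipation_le [MeasurableSpace E] [BorelSpace E]
    [SecondCountableTopology E] {Ω : Type*} {𝒢 mΩ : MeasurableSpace Ω} {μ : Measure Ω}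
    [IsProbabilityMeasure μ] {a b : E → E} {X : Ω → E} {ξ : Ω → ℝ} {p K lam ε : ℝ} {Δ : ℝ≥0}
    (hp₀ : 0 < p) (hp₂ : p ≤ 2) (hK : 1 ≤ K) (hKΔ : K ^ 4 * Δ ≤ 1) (hKε : 68 * (K ^ 4 * Δ) ≤ ε)
    (ha : Measurable a) (hb : Measurable b) (ha_le : ∀ x, ‖a x‖ ≤ K * ‖x‖)
    (hb_le : ∀ x, ‖b x‖ ≤ K * ‖x‖) (hdiss : ∀ x ≠ 0, dissipation p x (a x) (b x) ≤ -lam)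
    (h𝒢 : 𝒢 ≤ mΩ) (hX : Measurable[𝒢] X) (hXp : Integrable (fun ω ↦ ‖X ω‖ ^ p) μ)
    (hξ : Measurable ξ) (hlaw : μ.map ξ = gaussianReal 0 Δ)
    (hindep : Indep (MeasurableSpace.comap ξ inferInstance) 𝒢 μ) :
    ∀ᵐ ω ∂μ, (μ[fun ω ↦ ‖X ω + (Δ : ℝ) • a (X ω) + ξ ω • b (X ω)‖ ^ p | 𝒢]) ω ≤
      (1 - p * (lam - ε) * Δ) * ‖X ω‖ ^ p := by
  have hXξ : IndepFun X ξ μ :=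
    (IndepFun_iff_Indep X ξ μ).2 (indep_of_indep_of_le_right hindep hX.comap_le).symm
  have hξ₂ : MemLp ξ 2 μ :=
    (memLp_map_measure_iff (g := id) (by fun_prop) hξ.aemeasurable).1
      (hlaw ▸ memLp_id_gaussianReal 2)
  have hint := integrable_norm_add_smul_add_smul_rpow (Δ : ℝ) hp₀.le hp₂ (zero_le_one.trans hK)
    ha hb ha_le hb_le (hX.mono h𝒢 le_rfl) hXp hξ₂ hξ hXξ
  filter_upwards [condExp_ae_eq_integral_map_of_indep h𝒢 hX hξ hindep
    (measurable_norm_add_smul_add_smul_rpow ha hb Δ p).stronglyMeasurable hint] with ω hω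
  rw [hω, hlaw]
  exact integral_norm_rpow_le_of_dissipation_le hp₀ hp₂ hK hKΔ hKε (ha_le _) (hb_le _) (hdiss _)

end OneStep

section Truncation

variable {d : ℕ} {f g : EuclideanSpace ℝ (Fin d) → EuclideanSpace ℝ (Fin d)} {h : ℝ}

/- One pair `(c, y)` serves all functions, so properties of `f` and `g` on the ball of radius `h`
that are invariant under joint scaling carry over to the truncations. -/
lemma exists_trunc_eq_smul (hh : 0 < h) (x : EuclideanSpace ℝ (Fin d)) :
    ∃ c > (0 : ℝ), ∃ y, ‖y‖ ≤ h ∧ x = c • y ∧ ∀ f, trunc f h x = c • f y := by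
  rcases le_or_gt ‖x‖ h with hx | hx
  · exact ⟨1, one_pos, x, hx, by simp, fun f ↦ by simp [trunc, hx]⟩
  · have hx₀ : 0 < ‖x‖ := hh.trans hx
    refine ⟨‖x‖ / h, by positivity, (h / ‖x‖) • x, ?_, ?_, fun f ↦ by rw [trunc, if_neg hx.not_ge]⟩
    · rw [norm_smul, norm_div, norm_norm, div_mul_cancel₀ _ hx₀.ne', Real.norm_of_nonneg hh.le]
    · rw [smul_smul, div_mul_div_cancel₀ hh.ne', div_self hx₀.ne', one_smul]

lemma norm_trunc_le {L : ℝ} (hh : 0 < h) (hf0 : f 0 = 0)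
    (hf : ∀ x y, ‖x‖ ≤ h → ‖y‖ ≤ h → ‖f x - f y‖ ≤ L * ‖x - y‖)
    (x : EuclideanSpace ℝ (Fin d)) : ‖trunc f h x‖ ≤ L * ‖x‖ := by
  obtain ⟨c, -, y, hy, rfl, htrunc⟩ := exists_trunc_eq_smul hh x
  rw [htrunc, norm_smul, norm_smul, mul_left_comm]
  gcongr
  simpa [hf0] using hf y 0 hy (by simpa using hh.le)

lemma Phi_trunc_le {p C : ℝ} (hh : 0 < h) (hPhi : ∀ y ≠ 0, Phi f g p y ≤ C)
    {x : EuclideanSpace ℝ (Fin d)} (hx : x ≠ 0) : Phi (trunc f h) (trunc g h) p x ≤ C := by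
  obtain ⟨c, hc, y, -, rfl, htrunc⟩ := exists_trunc_eq_smul hh x
  calc Phi (trunc f h) (trunc g h) p (c • y)
      = dissipation p (c • y) (c • f y) (c • g y) := by rw [← htrunc, ← htrunc]; rfl
    _ = Phi f g p y := dissipation_smul p hc.ne' y (f y) (g y)
    _ ≤ C := hPhi y (right_ne_zero_of_smul hx)

lemma measurable_trunc (hf : Measurable f) : Measurable (trunc f h) :=
  Measurable.ite (measurableSet_le measurable_norm measurable_const) hf (by fun_prop)

end Truncation

lemma continuous_of_norm_sub_le_of_norm_le {E F : Type*} [SeminormedAddCommGroup E]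
    [SeminormedAddCommGroup F] {f : E → F} {L : ℝ → ℝ}
    (hf : ∀ R > 0, ∀ x y, ‖x‖ ≤ R → ‖y‖ ≤ R → ‖f x - f y‖ ≤ L R * ‖x - y‖) : Continuous f := by
  refine continuous_iff_continuousAt.2 fun x ↦ ?_
  have hlip : LipschitzOnWith (L (‖x‖ + 1)).toNNReal f (Metric.closedBall 0 (‖x‖ + 1)) := by
    refine LipschitzOnWith.of_dist_le_mul fun y hy z hz ↦ ?_
    rw [dist_eq_norm, dist_eq_norm]
    refine (hf (‖x‖ + 1) (by positivity) y z (by simpa using hy) (by simpa using hz)).trans ?_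
    gcongr
    exact Real.le_coe_toNNReal _
  exact hlip.continuousOn.continuousAt (Metric.closedBall_mem_nhds_of_mem (by simp))

lemma exists_forall_max_one_pow_four_mul_le {φ : ℝ → ℝ} {Δ₀ η : ℝ} (hΔ₀ : 0 < Δ₀) (hη : 0 < η)
    (hφ : Tendsto (fun Δ ↦ φ Δ ^ 4 * Δ) (𝓝[Ioc 0 Δ₀] 0) (𝓝 0)) :
    ∃ Δs ∈ Ioc 0 Δ₀, ∀ Δ ∈ Ioo 0 Δs, max (φ Δ) 1 ^ 4 * Δ ≤ η := by
  rw [nhdsWithin_Ioc_eq_nhdsGT hΔ₀] at hφ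
  have hid : Tendsto id (𝓝[>] (0 : ℝ)) (𝓝 0) := tendsto_id.mono_right nhdsWithin_le_nhds
  obtain ⟨Δs, hΔs, hsub⟩ := (mem_nhdsGT_iff_exists_mem_Ioc_Ioo_subset hΔ₀).1
    ((hφ.eventually_lt_const hη).and (hid.eventually_lt_const hη))
  refine ⟨Δs, hΔs, fun Δ hΔ ↦ ?_⟩
  obtain ⟨hφη, hΔη⟩ := hsub hΔ
  rcases max_choice (φ Δ) 1 with hmax | hmax <;> rw [hmax]
  · exact hφη.le
  · simpa using hΔη.le

theorem stmt15_general {d : ℕ} {f g : EuclideanSpace ℝ (Fin d) → EuclideanSpace ℝ (Fin d)}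
    (hf0 : f 0 = 0) (hg0 : g 0 = 0) {L : ℝ → ℝ}
    (hlip : ∀ R > (0 : ℝ), ∀ x y : EuclideanSpace ℝ (Fin d), ‖x‖ ≤ R → ‖y‖ ≤ R →
      ‖f x - f y‖ ⊔ ‖g x - g y‖ ≤ L R * ‖x - y‖)
    {p lam : ℝ} (hp : p ∈ Ioc (0 : ℝ) 2) (hPhi : ∀ x, x ≠ 0 → Phi f g p x ≤ -lam)
    {Δ₀ : ℝ} (hΔ₀ : 0 < Δ₀) {h : ℝ → ℝ} (hhpos : ∀ Δ ∈ Ioc (0 : ℝ) Δ₀, 0 < h Δ)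
    (hLh : Tendsto (fun Δ ↦ L (h Δ) ^ 4 * Δ) (𝓝[Ioc 0 Δ₀] 0) (𝓝 0)) {ε : ℝ} (hε : 0 < ε) :
    ∃ Δs ∈ Ioc (0 : ℝ) Δ₀, ∀ Δ ∈ Ioo (0 : ℝ) Δs,
      ∀ (Ω : Type*) [mΩ : MeasurableSpace Ω] (P : Measure Ω) [IsProbabilityMeasure P]
        (𝒢 : MeasurableSpace Ω), 𝒢 ≤ mΩ →
      ∀ X : Ω → EuclideanSpace ℝ (Fin d), Measurable[𝒢] X →
        Integrable (fun ω ↦ ‖X ω‖ ^ p) P →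
      ∀ ξ : Ω → ℝ, Measurable[mΩ] ξ →
        @Measure.map Ω ℝ mΩ Real.measurableSpace ξ P = gaussianReal 0 (Real.toNNReal Δ) →
        Indep (MeasurableSpace.comap ξ Real.measurableSpace) 𝒢 P →
        ∀ᵐ ω ∂P,
          (P[fun ω' ↦ ‖X ω' + Δ • trunc f (h Δ) (X ω') + ξ ω' • trunc g (h Δ) (X ω')‖ ^ p | 𝒢]) ω
            ≤ (1 - p * (lam - ε) * Δ) * ‖X ω‖ ^ p := by
  have hf_lip R (hR : R > 0) x y (hx : ‖x‖ ≤ R) (hy : ‖y‖ ≤ R) : ‖f x - f y‖ ≤ L R * ‖x - y‖ :=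
    (le_max_left _ _).trans (hlip R hR x y hx hy)
  have hg_lip R (hR : R > 0) x y (hx : ‖x‖ ≤ R) (hy : ‖y‖ ≤ R) : ‖g x - g y‖ ≤ L R * ‖x - y‖ :=
    (le_max_right _ _).trans (hlip R hR x y hx hy)
  obtain ⟨Δs, hΔs, hsmall⟩ := exists_forall_max_one_pow_four_mul_le hΔ₀
    (lt_min one_pos (show 0 < ε / 68 by positivity)) hLh
  refine ⟨Δs, hΔs, fun Δ hΔ Ω mΩ P _ 𝒢 h𝒢 X hX hXp ξ hξ hlaw hindep ↦ ?_⟩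
  have hh : 0 < h Δ := hhpos Δ ⟨hΔ.1, hΔ.2.le.trans hΔs.2⟩
  have hKΔ := hsmall Δ hΔ
  have hgrowth (x : EuclideanSpace ℝ (Fin d)) : L (h Δ) * ‖x‖ ≤ max (L (h Δ)) 1 * ‖x‖ := by
    gcongr
    exact le_max_left _ _
  lift Δ to ℝ≥0 using hΔ.1.le
  rw [Real.toNNReal_coe] at hlaw
  exact condExp_norm_rpow_le_of_dissipation_le hp.1 hp.2 (le_max_right _ _)
    (hKΔ.trans (min_le_left _ _)) (by linarith [hKΔ.trans (min_le_right _ _)])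
    (measurable_trunc (continuous_of_norm_sub_le_of_norm_le hf_lip).measurable)
    (measurable_trunc (continuous_of_norm_sub_le_of_norm_le hg_lip).measurable)
    (fun x ↦ (norm_trunc_le hh hf0 (hf_lip _ hh) x).trans (hgrowth x))
    (fun x ↦ (norm_trunc_le hh hg0 (hg_lip _ hh) x).trans (hgrowth x))
    (fun x hx ↦ Phi_trunc_le hh hPhi hx) h𝒢 hX hXp hξ hlaw hindep

theorem stmt15 {d : ℕ} (hd : 1 ≤ d)
    (f g : EuclideanSpace ℝ (Fin d) → EuclideanSpace ℝ (Fin d))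
    (hf0 : f 0 = 0) (hg0 : g 0 = 0)
    (L : ℝ → ℝ) (hLpos : ∀ R > (0:ℝ), 0 < L R) (hLmono : MonotoneOn L (Set.Ioi 0))
    (hlip : ∀ R > (0:ℝ), ∀ x y : EuclideanSpace ℝ (Fin d), ‖x‖ ≤ R → ‖y‖ ≤ R →
      ‖f x - f y‖ ⊔ ‖g x - g y‖ ≤ L R * ‖x - y‖)
    (p lam : ℝ) (hp : p ∈ Set.Ioo (0:ℝ) 1) (hlam : 0 < lam)
    (hPhi : ∀ x : EuclideanSpace ℝ (Fin d), x ≠ 0 → Phi f g p x ≤ -lam)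
    (Δ₀ : ℝ) (hΔ₀ : 0 < Δ₀) (h : ℝ → ℝ)
    (hhpos : ∀ Δ ∈ Set.Ioc (0:ℝ) Δ₀, 0 < h Δ)
    (hhdec : AntitoneOn h (Set.Ioc 0 Δ₀))
    (hhinf : Tendsto h (nhdsWithin 0 (Set.Ioc 0 Δ₀)) atTop)
    (hLh : Tendsto (fun Δ => L (h Δ) ^ 4 * Δ) (nhdsWithin 0 (Set.Ioc 0 Δ₀)) (nhds 0)) :
    ∀ ε ∈ Set.Ioo 0 lam, ∃ Δs ∈ Set.Ioc (0:ℝ) Δ₀, ∀ Δ ∈ Set.Ioo (0:ℝ) Δs,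
      ∀ (Ω : Type) [mΩ : MeasurableSpace Ω] (P : Measure Ω) [IsProbabilityMeasure P]
        (𝒢 : MeasurableSpace Ω), 𝒢 ≤ mΩ →
      ∀ X : Ω → EuclideanSpace ℝ (Fin d), Measurable[𝒢] X →
        Integrable (fun ω => ‖X ω‖ ^ p) P →
      ∀ ξ : Ω → ℝ, Measurable[mΩ] ξ →
        @Measure.map Ω ℝ mΩ Real.measurableSpace ξ P = gaussianReal 0 (Real.toNNReal Δ) →
        Indep (MeasurableSpace.comap ξ Real.measurableSpace) 𝒢 P →
        ∀ᵐ ω ∂P,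
          (P[fun ω' => ‖X ω' + Δ • trunc f (h Δ) (X ω') + ξ ω' • trunc g (h Δ) (X ω')‖ ^ p | 𝒢]) ω
            ≤ (1 - p * (lam - ε) * Δ) * ‖X ω‖ ^ p :=
  fun _ hε ↦ stmt15_general hf0 hg0 hlip ⟨hp.1, by linarith [hp.2]⟩ hPhi hΔ₀ hhpos hLh hε.1
end
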